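/- Let C be a simple cycle of length n ≥ 3. Then h*(C_C; z) = (1+3z)^n − (2z)^n, and consequently Vol(C_C) = 4^n − 2^n. -/

import Mathlib

open Polynomial Pointwise

/-- The set of vertices (generating points) of the cosmological polytope of the
multigraph with edge-endpoint map `ends : E → Sym2 V`. -/
def cosmoVertices {V E : Type*} [DecidableEq V] [DecidableEq E] (ends : E → Sym2 V) :
    Set ((V ⊕ E) → ℝ) :=
  { x | ∃ (f : E) (i j : V), ends f = s(i, j) ∧
      (x = Pi.single (Sum.inl i) 1 + Pi.single (Sum.inl j) 1 - Pi.single (Sum.inr f) 1 ∨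
       x = Pi.single (Sum.inl i) 1 - Pi.single (Sum.inl j) 1 + Pi.single (Sum.inr f) 1 ∨
       x = -Pi.single (Sum.inl i) 1 + Pi.single (Sum.inl j) 1 + Pi.single (Sum.inr f) 1) }

/-- The cosmological polytope of a multigraph. -/
def cosmoPolytope {V E : Type*} [DecidableEq V] [DecidableEq E] (ends : E → Sym2 V) :
    Set ((V ⊕ E) → ℝ) :=
  convexHull ℝ (cosmoVertices ends)

/-- Number of lattice points of the `t`-th dilate of `P`. -/
noncomputable def latticePointCount {ι : Type*} (P : Set (ι → ℝ)) (t : ℕ) : ℕ :=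
  Set.ncard { x : ι → ℤ | (fun k => (x k : ℝ)) ∈ (t : ℝ) • P }

/-- The Ehrhart series of `P` as a formal power series. -/
noncomputable def ehrhartSeries {ι : Type*} (P : Set (ι → ℝ)) : PowerSeries ℚ :=
  PowerSeries.mk fun t => if t = 0 then 1 else (latticePointCount P t : ℚ)

/-- `h` is the `h^*`-polynomial of the `d`-dimensional lattice polytope `P`:
`Ehr(P; z) = h(z) / (1-z)^(d+1)` as formal power series. -/
def IsHStarPoly {ι : Type*} (P : Set (ι → ℝ)) (d : ℕ) (h : Polynomial ℚ) : Prop :=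
  ehrhartSeries P * (1 - PowerSeries.X) ^ (d + 1) = (h : PowerSeries ℚ)

/-- Adjacency relation of the multigraph given by `ends`. -/
def multigraphAdj {V E : Type*} (ends : E → Sym2 V) (i j : V) : Prop :=
  ∃ f, ends f = s(i, j)

/-- Reachability in the multigraph given by `ends`. -/
def multigraphReach {V E : Type*} (ends : E → Sym2 V) : V → V → Prop :=
  Relation.ReflTransGen (multigraphAdj ends)

/-- The number of connected components of the multigraph given by `ends`. -/
noncomputable def numComponents {V E : Type*} (ends : E → Sym2 V) : ℕ :=
  Nat.card (Quot (multigraphReach ends))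


/-- The endpoint map of the simple cycle of length `n` on vertex set `ZMod n`: one edge
between `i` and `i + 1` for each `i`. -/
def cycleEnds (n : ℕ) : ZMod n → Sym2 (ZMod n) := fun i => s(i, i + 1)

/-- local lattice data `(y,u,w)` of degree `m` with `u+w=0`. -/
noncomputable def locB (m : ℕ) : Finset (ℤ × ℤ × ℤ) :=
  (Finset.Ioc (-(m:ℤ)) m).image fun k => ((m:ℤ), k, -k)

noncomputable def locA (m : ℕ) : Finset (ℤ × ℤ × ℤ) :=
  ((Finset.Icc (-(m:ℤ)) m).image fun k => ((m:ℤ), k, -k)) ∪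
  ((Finset.Ico (-(m:ℤ)) m).image fun k => (k, -k, (m:ℤ)))

lemma card_locB (m : ℕ) : (locB m).card = 2 * m := by
  unfold locB
  rw [Finset.card_image_of_injective]
  · simp; omega
  · intro a b h; simp at h; exact h

lemma card_locA (m : ℕ) : (locA m).card = 4 * m + 1 := by
  unfold locA
  rw [Finset.card_union_of_disjoint, Finset.card_image_of_injective,
    Finset.card_image_of_injective]
  · simp; omega
  · intro a b h; simp at h; exact h
  · intro a b h; simp at h; exact h
  · rw [Finset.disjoint_left]
    intro x hx hy
    simp only [Finset.mem_image, Finset.mem_Icc, Finset.mem_Ico] at hx hy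
    obtain ⟨a, ha, rfl⟩ := hx
    obtain ⟨b, hb, h⟩ := hy
    simp at h
    omega

lemma mem_locB (m : ℕ) (y u w : ℤ) : (y, u, w) ∈ locB m ↔
    u + y > 0 ∧ w + y ≥ 0 ∧ u + w = 0 ∧ y + u + w = m := by
  unfold locB
  simp only [Finset.mem_image, Finset.mem_Ioc, Prod.mk.injEq]
  constructor
  · rintro ⟨k, hk, h1, h2, h3⟩; omega
  · intro h; exact ⟨u, by omega, by omega, rfl, by omega⟩

lemma mem_locA (m : ℕ) (y u w : ℤ) : (y, u, w) ∈ locA m ↔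
    u + y ≥ 0 ∧ w + y ≥ 0 ∧ u + w ≥ 0 ∧ (u + y = 0 ∨ u + w = 0) ∧ y + u + w = m := by
  unfold locA
  simp only [Finset.mem_union, Finset.mem_image, Finset.mem_Icc, Finset.mem_Ico, Prod.mk.injEq]
  constructor
  · rintro (⟨k, hk, h1, h2, h3⟩ | ⟨k, hk, h1, h2, h3⟩) <;> omega
  · intro h
    by_cases h0 : u + w = 0
    · exact Or.inl ⟨u, by omega, by omega, rfl, by omega⟩
    · exact Or.inr ⟨y, by omega, rfl, by omega, by omega⟩

/-- tuples of local data of total degree `t`. -/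
def tuples {ι α : Type*} [Fintype ι] [DecidableEq ι] [DecidableEq α]
    (S : ℕ → Finset α) (t : ℕ) : Finset (ι → α) :=
  (Finset.finsuppAntidiag (Finset.univ : Finset ι) t).biUnion
    fun l => Fintype.piFinset fun i => S (l i)

lemma card_tuples {ι α : Type*} [Fintype ι] [DecidableEq ι] [DecidableEq α]
    (S : ℕ → Finset α) (hS : ∀ a m m', a ∈ S m → a ∈ S m' → m = m') (t : ℕ) :
    ((tuples (ι := ι) S t).card : ℚ) =
      PowerSeries.coeff t ((PowerSeries.mk fun m => ((S m).card : ℚ)) ^ Fintype.card ι) := by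
  unfold tuples
  rw [Finset.card_biUnion]
  · have : (PowerSeries.mk fun m => ((S m).card : ℚ)) ^ Fintype.card ι =
      ∏ _i : ι, (PowerSeries.mk fun m => ((S m).card : ℚ)) := by
      simp
    rw [this, PowerSeries.coeff_prod]
    push_cast
    simp [Fintype.card_piFinset]
  · intro l _ l' _ hne
    rw [Function.onFun, Finset.disjoint_left]
    intro g hg hg'
    apply hne
    ext i
    rw [Fintype.mem_piFinset] at hg hg'
    exact hS _ _ _ (hg i) (hg' i)

lemma mem_tuples {ι α : Type*} [Fintype ι] [DecidableEq ι] [DecidableEq α]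
    (S : ℕ → Finset α) (t : ℕ) (g : ι → α) :
    g ∈ tuples S t ↔ ∃ l : ι → ℕ, ∑ i, l i = t ∧ ∀ i, g i ∈ S (l i) := by
  unfold tuples
  simp only [Finset.mem_biUnion, Finset.mem_finsuppAntidiag, Fintype.mem_piFinset]
  constructor
  · rintro ⟨l, ⟨h1, h2⟩, h3⟩
    exact ⟨l, h1, h3⟩
  · rintro ⟨l, h1, h2⟩
    exact ⟨Finsupp.equivFunOnFinite.symm l, ⟨by simpa using h1, by simp⟩, by simpa using h2⟩

lemma mem_tuplesB {ι : Type*} [Fintype ι] [DecidableEq ι] (t : ℕ) (g : ι → ℤ × ℤ × ℤ) :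
    g ∈ tuples locB t ↔ (∀ i, (g i).2.1 + (g i).1 > 0 ∧ (g i).2.2 + (g i).1 ≥ 0 ∧
      (g i).2.1 + (g i).2.2 = 0) ∧ ∑ i, ((g i).1 + (g i).2.1 + (g i).2.2) = t := by
  rw [mem_tuples]
  have key : ∀ i m, g i ∈ locB m ↔ _ := fun i m => mem_locB m (g i).1 (g i).2.1 (g i).2.2
  constructor
  · rintro ⟨l, h1, h2⟩
    simp only [key] at h2
    refine ⟨fun i => ⟨(h2 i).1, (h2 i).2.1, (h2 i).2.2.1⟩, ?_⟩
    rw [← h1]; push_cast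
    exact Finset.sum_congr rfl fun i _ => (h2 i).2.2.2
  · rintro ⟨h1, h2⟩
    have h3 : ∀ i, (((g i).1 + (g i).2.1 + (g i).2.2).toNat : ℤ) =
        (g i).1 + (g i).2.1 + (g i).2.2 := fun i => Int.toNat_of_nonneg (by have := h1 i; omega)
    refine ⟨fun i => ((g i).1 + (g i).2.1 + (g i).2.2).toNat, ?_, fun i => ?_⟩
    · zify; rw [← h2]; exact Finset.sum_congr rfl fun i _ => h3 i
    · rw [key]; have := h1 i; exact ⟨this.1, this.2.1, this.2.2, (h3 i).symm⟩

lemma mem_tuplesA {ι : Type*} [Fintype ι] [DecidableEq ι] (t : ℕ) (g : ι → ℤ × ℤ × ℤ) :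
    g ∈ tuples locA t ↔ (∀ i, (g i).2.1 + (g i).1 ≥ 0 ∧ (g i).2.2 + (g i).1 ≥ 0 ∧
      (g i).2.1 + (g i).2.2 ≥ 0 ∧ ((g i).2.1 + (g i).1 = 0 ∨ (g i).2.1 + (g i).2.2 = 0)) ∧
      ∑ i, ((g i).1 + (g i).2.1 + (g i).2.2) = t := by
  rw [mem_tuples]
  have key : ∀ i m, g i ∈ locA m ↔ _ := fun i m => mem_locA m (g i).1 (g i).2.1 (g i).2.2
  constructor
  · rintro ⟨l, h1, h2⟩
    simp only [key] at h2
    refine ⟨fun i => ⟨(h2 i).1, (h2 i).2.1, (h2 i).2.2.1, (h2 i).2.2.2.1⟩, ?_⟩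
    rw [← h1]; push_cast
    exact Finset.sum_congr rfl fun i _ => (h2 i).2.2.2.2
  · rintro ⟨h1, h2⟩
    have h3 : ∀ i, (((g i).1 + (g i).2.1 + (g i).2.2).toNat : ℤ) =
        (g i).1 + (g i).2.1 + (g i).2.2 := fun i => Int.toNat_of_nonneg (by have := h1 i; omega)
    refine ⟨fun i => ((g i).1 + (g i).2.1 + (g i).2.2).toNat, ?_, fun i => ?_⟩
    · zify; rw [← h2]; exact Finset.sum_congr rfl fun i _ => h3 i
    · rw [key]; have := h1 i; exact ⟨this.1, this.2.1, this.2.2.1, this.2.2.2, (h3 i).symm⟩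

/-- Feasible decomposition over the reals. -/
def RFeas (n : ℕ) [NeZero n] (t : ℝ) (x : ZMod n ⊕ ZMod n → ℝ) : Prop :=
  ∃ u w : ZMod n → ℝ, (∀ i, x (Sum.inl i) = u i + w (i - 1)) ∧
    (∀ i, 0 ≤ u i + w i ∧ 0 ≤ u i + x (Sum.inr i) ∧ 0 ≤ w i + x (Sum.inr i)) ∧
    ∑ i, (x (Sum.inr i) + u i + w i) = t

lemma convex_RFeas (n : ℕ) [NeZero n] : Convex ℝ {x | RFeas n 1 x} := by
  rintro x ⟨u, w, h1, h2, h3⟩ x' ⟨u', w', h1', h2', h3'⟩ a b ha hb hab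
  refine ⟨a • u + b • u', a • w + b • w', fun i => ?_, fun i => ?_, ?_⟩
  · simp [h1, h1']; ring
  · obtain ⟨p, q, r⟩ := h2 i
    obtain ⟨p', q', r'⟩ := h2' i
    have := mul_nonneg ha p
    have := mul_nonneg ha q
    have := mul_nonneg ha r
    have := mul_nonneg hb p'
    have := mul_nonneg hb q'
    have := mul_nonneg hb r'
    simp only [Pi.add_apply, Pi.smul_apply, smul_eq_mul]
    refine ⟨by linarith, by linarith, by linarith⟩
  · calc _ = a * ∑ i, (x (Sum.inr i) + u i + w i) + b * ∑ i, (x' (Sum.inr i) + u' i + w' i) := by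
          rw [Finset.mul_sum, Finset.mul_sum, ← Finset.sum_add_distrib]
          refine Finset.sum_congr rfl fun i _ => ?_
          simp only [Pi.add_apply, Pi.smul_apply, smul_eq_mul]; ring
      _ = 1 := by rw [h3, h3']; linarith

lemma RFeas_vertex (n : ℕ) [NeZero n] (f : ZMod n) (a b c : ℝ) (h : 0 ≤ a + b) (h' : 0 ≤ a + c)
    (h'' : 0 ≤ b + c) (hs : a + b + c = 1) :
    RFeas n 1 (a • Pi.single (Sum.inl f) 1 + b • Pi.single (Sum.inl (f + 1)) 1
      + c • Pi.single (Sum.inr f) 1) := by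
  refine ⟨a • Pi.single f 1, b • Pi.single f 1, fun i => ?_, fun i => ?_, ?_⟩
  · simp [Pi.single_apply, sub_eq_iff_eq_add]
  · by_cases hi : i = f
    · subst hi; simp [Pi.single_apply, h, h', h'']
    · simp [Pi.single_apply, hi]
  · simp [Pi.single_apply, Finset.sum_add_distrib]; linarith

lemma polytope_sub (n : ℕ) [NeZero n] : cosmoPolytope (cycleEnds n) ⊆ {x | RFeas n 1 x} := by
  apply convexHull_min _ (convex_RFeas n)
  rintro x ⟨f, i, j, hf, hx⟩
  have A := RFeas_vertex n f 1 1 (-1) (by norm_num) (by norm_num) (by norm_num) (by norm_num)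
  have B := RFeas_vertex n f 1 (-1) 1 (by norm_num) (by norm_num) (by norm_num) (by norm_num)
  have C := RFeas_vertex n f (-1) 1 1 (by norm_num) (by norm_num) (by norm_num) (by norm_num)
  simp only [cycleEnds, Sym2.eq_iff] at hf
  show RFeas n 1 x
  rcases hf with ⟨rfl, rfl⟩ | ⟨rfl, rfl⟩ <;> rcases hx with rfl | rfl | rfl
  · convert A using 1; ext k; simp; ring
  · convert B using 1; ext k; simp; ring
  · convert C using 1; ext k; simp
  · convert A using 1; ext k; simp; ring
  · convert C using 1; ext k; simp; ring
  · convert B using 1; ext k; simp; ring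

lemma sub_polytope (n : ℕ) [NeZero n] {x : ZMod n ⊕ ZMod n → ℝ} (hx : RFeas n 1 x) :
    x ∈ cosmoPolytope (cycleEnds n) := by
  obtain ⟨u, w, h1, h2, h3⟩ := hx
  let W : ZMod n × Fin 3 → ℝ := fun k => ![(u k.1 + w k.1) / 2, (u k.1 + x (Sum.inr k.1)) / 2,
    (w k.1 + x (Sum.inr k.1)) / 2] k.2
  let v : ZMod n × Fin 3 → (ZMod n ⊕ ZMod n → ℝ) := fun k =>
    ![Pi.single (Sum.inl k.1) 1 + Pi.single (Sum.inl (k.1+1)) 1 - Pi.single (Sum.inr k.1) 1,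
      Pi.single (Sum.inl k.1) 1 - Pi.single (Sum.inl (k.1+1)) 1 + Pi.single (Sum.inr k.1) 1,
      -Pi.single (Sum.inl k.1) 1 + Pi.single (Sum.inl (k.1+1)) 1 + Pi.single (Sum.inr k.1) 1] k.2
  have hv : ∀ k ∈ Finset.univ, v k ∈ cosmoPolytope (cycleEnds n) := by
    rintro ⟨f, k⟩ -
    apply subset_convexHull
    refine ⟨f, f, f + 1, rfl, ?_⟩
    fin_cases k <;> simp [v]
  have hW : ∀ k ∈ Finset.univ, 0 ≤ W k := by
    rintro ⟨f, k⟩ -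
    obtain ⟨p, q, r⟩ := h2 f
    fin_cases k <;> simp [W] <;> linarith
  have hW1 : ∑ k, W k = 1 := by
    rw [Fintype.sum_prod_type, ← h3]
    refine Finset.sum_congr rfl fun i _ => ?_
    simp [W, Fin.sum_univ_three]; ring
  have := (convex_convexHull ℝ (cosmoVertices (cycleEnds n))).sum_mem hW hW1 hv
  have e : x = ∑ k, W k • v k := by
    rw [Fintype.sum_prod_type]
    have e1 : ∀ f, ∑ k, W (f, k) • v (f, k) = u f • Pi.single (Sum.inl f) 1 +
        w f • Pi.single (Sum.inl (f + 1)) 1 + x (Sum.inr f) • Pi.single (Sum.inr f) 1 := by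
      intro f
      ext k
      simp [Fin.sum_univ_three, W, v]; ring
    simp only [e1]
    ext (i | i)
    · have : ∀ f : ZMod n, (i = f + 1 ↔ i - 1 = f) := fun f => by rw [sub_eq_iff_eq_add]
      simp [Finset.sum_apply, Pi.single_apply, Finset.sum_add_distrib, h1, this]
    · simp [Finset.sum_apply, Pi.single_apply, Finset.sum_add_distrib]
  rw [e]; exact this

lemma mem_dilate (n : ℕ) [NeZero n] (t : ℕ) (ht : t ≠ 0) (x : ZMod n ⊕ ZMod n → ℝ) :
    x ∈ (t : ℝ) • cosmoPolytope (cycleEnds n) ↔ RFeas n t x := by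
  have h0 : (t : ℝ) ≠ 0 := by exact_mod_cast ht
  have hp : 0 < (t : ℝ) := by positivity
  rw [Set.mem_smul_set_iff_inv_smul_mem₀ h0]
  constructor
  · intro h
    obtain ⟨u, w, h1, h2, h3⟩ := polytope_sub n h
    simp only [Pi.smul_apply, smul_eq_mul] at h1 h2 h3
    have hc : ∀ i, (t : ℝ) * ((t : ℝ)⁻¹ * x i) = x i := fun i => by field_simp
    refine ⟨fun i => t * u i, fun i => t * w i, fun i => ?_, fun i => ?_, ?_⟩
    · rw [← hc, h1]; ring
    · obtain ⟨p, q, r⟩ := h2 i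
      rw [← hc]
      refine ⟨by rw [← mul_add]; positivity, by rw [← mul_add]; positivity,
        by rw [← mul_add]; positivity⟩
    · have h4 : (t : ℝ) * ∑ i, ((t : ℝ)⁻¹ * x (Sum.inr i) + u i + w i) = t := by rw [h3, mul_one]
      rw [Finset.mul_sum] at h4
      refine Eq.trans (Finset.sum_congr rfl fun i _ => ?_) h4
      rw [mul_add, mul_add, hc]
  · rintro ⟨u, w, h1, h2, h3⟩
    apply sub_polytope
    refine ⟨fun i => (t : ℝ)⁻¹ * u i, fun i => (t : ℝ)⁻¹ * w i, fun i => ?_, fun i => ?_, ?_⟩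
    · simp [h1]; ring
    · obtain ⟨p, q, r⟩ := h2 i
      simp only [Pi.smul_apply, smul_eq_mul]
      refine ⟨by rw [← mul_add]; positivity, by rw [← mul_add]; positivity,
        by rw [← mul_add]; positivity⟩
    · simp only [Pi.smul_apply, smul_eq_mul, ← mul_add, ← Finset.mul_sum, h3]
      field_simp

/-- Feasible decomposition over the integers. -/
def ZFeas (n : ℕ) [NeZero n] (x : ZMod n ⊕ ZMod n → ℤ) (u : ZMod n → ℤ) : Prop :=
  ∀ i, 0 ≤ u i + (x (Sum.inl (i + 1)) - u (i + 1)) ∧ 0 ≤ u i + x (Sum.inr i) ∧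
    0 ≤ (x (Sum.inl (i + 1)) - u (i + 1)) + x (Sum.inr i)

lemma sum_all (n : ℕ) [NeZero n] {R : Type*} [CommRing R] (y u w : ZMod n → R) :
    ∑ i, (y i + u i + w i) = ∑ i, (u i + w (i - 1)) + ∑ i, y i := by
  have : ∑ i, w (i - 1) = ∑ i, w i := (Equiv.subRight (1 : ZMod n)).sum_comp w
  simp only [Finset.sum_add_distrib, this]; ring

lemma RFeas_iff (n : ℕ) [NeZero n] (t : ℕ) (x : ZMod n ⊕ ZMod n → ℤ) :
    RFeas n t (fun k => (x k : ℝ)) ↔ (∃ u, ZFeas n x u) ∧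
      ∑ i, x (Sum.inl i) + ∑ i, x (Sum.inr i) = t := by
  constructor
  · rintro ⟨u, w, h1, h2, h3⟩
    beta_reduce at h1 h2 h3
    have hw : ∀ i, w i = x (Sum.inl (i + 1)) - u (i + 1) := fun i => by
      rw [h1]; simp
    refine ⟨⟨fun i => ⌊u i⌋, fun i => ?_⟩, ?_⟩
    · obtain ⟨p, q, r⟩ := h2 i
      rw [hw] at p r
      have a1 := Int.floor_le (u (i + 1))
      have a2 := Int.lt_floor_add_one (u i)
      beta_reduce
      refine ⟨?_, ?_, ?_⟩
      · have : ((⌊u (i+1)⌋ : ℤ) : ℝ) < ((⌊u i⌋ + 1 + x (Sum.inl (i + 1)) : ℤ) : ℝ) := by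
          push_cast; linarith
        have := Int.cast_lt.mp this
        omega
      · have : (0 : ℝ) < ((⌊u i⌋ + 1 + x (Sum.inr i) : ℤ) : ℝ) := by
          push_cast; linarith
        have := Int.cast_pos.mp this
        omega
      · have : ((⌊u (i+1)⌋ : ℤ) : ℝ) ≤ ((x (Sum.inl (i + 1)) + x (Sum.inr i) : ℤ) : ℝ) := by
          push_cast; linarith
        have := Int.cast_le.mp this
        omega
    · rw [sum_all] at h3
      simp only [← h1] at h3
      exact_mod_cast h3
  · rintro ⟨⟨u, hu⟩, hs⟩
    refine ⟨fun i => (u i : ℝ), fun i => (x (Sum.inl (i + 1)) : ℝ) - u (i + 1), fun i => ?_,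
      fun i => ?_, ?_⟩
    · simp
    · obtain ⟨p, q, r⟩ := hu i
      beta_reduce
      exact ⟨by exact_mod_cast p, by exact_mod_cast q, by exact_mod_cast r⟩
    · rw [sum_all]
      simp only [sub_add_cancel, add_sub_cancel]
      exact_mod_cast hs

/-- The map from tuples of local data to lattice points. -/
def Phi (n : ℕ) (g : ZMod n → ℤ × ℤ × ℤ) : ZMod n ⊕ ZMod n → ℤ :=
  Sum.elim (fun i => (g i).2.1 + (g (i - 1)).2.2) (fun i => (g i).1)

lemma cyc_all (n : ℕ) [NeZero n] (P : ZMod n → Prop) (h : ∀ i, P i → P (i + 1)) (i : ZMod n)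
    (hi : P i) (j : ZMod n) : P j := by
  have : ∀ k : ℕ, P (i + k) := by
    intro k
    induction k with
    | zero => simpa using hi
    | succ k ih => have := h _ ih; push_cast; rwa [← add_assoc]
  have := this (j - i).val
  simpa using this

lemma Phi_le (n : ℕ) [NeZero n] (t : ℕ) (g g' : ZMod n → ℤ × ℤ × ℤ)
    (hg : g ∈ tuples locA t) (hb : g ∉ tuples locB t) (hg' : g' ∈ tuples locA t)
    (h : Phi n g = Phi n g') (i : ZMod n) : (g i).2.1 ≤ (g' i).2.1 := by
  rw [mem_tuplesA] at hg hg'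
  have hy : ∀ i, (g i).1 = (g' i).1 := fun i => congrFun h (Sum.inr i)
  have hx : ∀ i, (g (i+1)).2.1 + (g i).2.2 = (g' (i+1)).2.1 + (g' i).2.2 := fun i => by
    have := congrFun h (Sum.inl (i + 1))
    simpa [Phi] using this
  by_contra hc
  have all := cyc_all n (fun i => (g' i).2.1 < (g i).2.1) (fun i hi => by
    have := hg.1 i; have := hg'.1 i; have := hy i; have := hx i
    show (g' (i+1)).2.1 < (g (i+1)).2.1
    omega) i (not_le.mp hc)
  apply hb
  rw [mem_tuplesB]
  refine ⟨fun j => ?_, hg.2⟩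
  have := hg.1 j; have := hg'.1 j; have := hy j; have := all j
  omega

lemma exists_min (n : ℕ) [NeZero n] (x : ZMod n ⊕ ZMod n → ℤ) (h : ∃ u, ZFeas n x u) :
    ∃ u, ZFeas n x u ∧ ∀ u', ZFeas n x u' → ∑ i, u i ≤ ∑ i, u' i := by
  have := Int.exists_least_of_bdd (P := fun s => ∃ u, ZFeas n x u ∧ ∑ i, u i = s)
    ⟨-∑ i, x (Sum.inr i), by
      rintro z ⟨u, hu, rfl⟩
      rw [← Finset.sum_neg_distrib]
      exact Finset.sum_le_sum fun i _ => by have := hu i; omega⟩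
    (by obtain ⟨u, hu⟩ := h; exact ⟨_, u, hu, rfl⟩)
  obtain ⟨_, ⟨u, hu, rfl⟩, h2⟩ := this
  exact ⟨u, hu, fun u' hu' => h2 _ ⟨u', hu', rfl⟩⟩

lemma lattice_image (n : ℕ) [NeZero n] (hn : 3 ≤ n) (t : ℕ) (ht : t ≠ 0) :
    { x : ZMod n ⊕ ZMod n → ℤ | (fun k => (x k : ℝ)) ∈ (t : ℝ) • cosmoPolytope (cycleEnds n) } =
      Phi n '' ((tuples locA t \ tuples locB t : Finset (ZMod n → ℤ × ℤ × ℤ)) : Set _) := by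
  have hne : ∀ i : ZMod n, i + 1 ≠ i := by
    intro i hi
    have : Fact (1 < n) := ⟨by omega⟩
    simp at hi
  ext x
  simp only [Set.mem_ofPred_eq, mem_dilate n t ht, RFeas_iff, Set.mem_image, Finset.mem_coe,
    Finset.mem_sdiff]
  constructor
  · rintro ⟨hu, hs⟩
    obtain ⟨u, hu, hmin⟩ := exists_min n x hu
    refine ⟨fun i => (x (Sum.inr i), u i, x (Sum.inl (i+1)) - u (i+1)), ⟨?_, ?_⟩, ?_⟩
    · rw [mem_tuplesA]
      refine ⟨fun i => ?_, ?_⟩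
      · have hi := hu i
        refine ⟨hi.2.1, hi.2.2, hi.1, ?_⟩
        by_contra hc
        push Not at hc
        simp only at hc
        have : ZFeas n x (u - Pi.single i 1) := by
          intro j
          have hj := hu j
          by_cases e1 : j = i
          · subst e1
            simp [Pi.single_apply, hne]
            omega
          · by_cases e2 : j + 1 = i
            · subst e2
              simp [Pi.single_apply, e1]
              omega
            · simp [Pi.single_apply, e1, e2]
              omega
        have := hmin _ this
        simp at this
      · simp only
        rw [sum_all n (fun i => x (Sum.inr i)) u (fun i => x (Sum.inl (i+1)) - u (i+1)), ← hs]
        simp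
    · rw [mem_tuplesB]
      rintro ⟨hb, -⟩
      have : ZFeas n x (fun i => u i - 1) := by
        intro j
        have hj := hu j
        have := hb j
        simp only at this ⊢
        omega
      have := hmin _ this
      simp at this
      omega
    · ext (i | i) <;> simp [Phi]
  · rintro ⟨g, ⟨hg, -⟩, rfl⟩
    rw [mem_tuplesA] at hg
    refine ⟨⟨fun i => (g i).2.1, fun i => ?_⟩, ?_⟩
    · have := hg.1 i
      simp [Phi]
      omega
    · rw [← hg.2, sum_all n (fun i => (g i).1) (fun i => (g i).2.1) (fun i => (g i).2.2)]
      simp [Phi]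

lemma tuplesB_subset {ι : Type*} [Fintype ι] [DecidableEq ι] (t : ℕ) :
    (tuples locB t : Finset (ι → _)) ⊆ tuples locA t := by
  intro g hg
  rw [mem_tuplesB] at hg
  rw [mem_tuplesA]
  exact ⟨fun i => by have := hg.1 i; omega, hg.2⟩

lemma Phi_inj (n : ℕ) [NeZero n] (t : ℕ) : Set.InjOn (Phi n)
    ((tuples locA t \ tuples locB t : Finset (ZMod n → ℤ × ℤ × ℤ)) : Set _) := by
  intro g hg g' hg' h
  simp only [Finset.mem_coe, Finset.mem_sdiff] at hg hg'
  have hu : ∀ i, (g i).2.1 = (g' i).2.1 := fun i =>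
    le_antisymm (Phi_le n t g g' hg.1 hg.2 hg'.1 h i) (Phi_le n t g' g hg'.1 hg'.2 hg.1 h.symm i)
  have hy : ∀ i, (g i).1 = (g' i).1 := fun i => congrFun h (Sum.inr i)
  have hx : ∀ i, (g (i+1)).2.1 + (g i).2.2 = (g' (i+1)).2.1 + (g' i).2.2 := fun i => by
    have := congrFun h (Sum.inl (i + 1))
    simpa [Phi] using this
  funext i
  refine Prod.ext (hy i) (Prod.ext (hu i) ?_)
  have := hx i; have := hu (i + 1)
  omega

lemma count_eq (n : ℕ) [NeZero n] (hn : 3 ≤ n) (t : ℕ) (ht : t ≠ 0) :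
    (latticePointCount (cosmoPolytope (cycleEnds n)) t : ℚ) =
      PowerSeries.coeff t ((PowerSeries.mk fun m => ((4 * m + 1 : ℕ) : ℚ)) ^ n -
        (PowerSeries.mk fun m => ((2 * m : ℕ) : ℚ)) ^ n) := by
  unfold latticePointCount
  rw [lattice_image n hn t ht, Set.InjOn.ncard_image (Phi_inj n t), Set.ncard_coe_finset,
    Finset.card_sdiff_of_subset (tuplesB_subset t),
    Nat.cast_sub (Finset.card_le_card (tuplesB_subset t)), card_tuples, card_tuples, map_sub,
    ZMod.card]
  · simp only [card_locA, card_locB]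
  · rintro ⟨y, u, w⟩ m m' h h'
    rw [mem_locB] at h h'; omega
  · rintro ⟨y, u, w⟩ m m' h h'
    rw [mem_locA] at h h'; omega

lemma gfA : (PowerSeries.mk fun m => ((4 * m + 1 : ℕ) : ℚ)) * (1 - PowerSeries.X) ^ 2 =
    1 + 3 * PowerSeries.X := by
  have : (1 - PowerSeries.X : PowerSeries ℚ) ^ 2 =
    1 - PowerSeries.X - PowerSeries.X + PowerSeries.X * PowerSeries.X := by ring
  have h3 : (3 : PowerSeries ℚ) = PowerSeries.C (3 : ℚ) := (map_ofNat (PowerSeries.C (R := ℚ)) 3).symm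
  rw [this, h3]
  ext k
  rcases k with _ | _ | k
  · simp [mul_add, mul_sub]
  · simp [mul_add, mul_sub, ← mul_assoc, PowerSeries.coeff_succ_mul_X, PowerSeries.coeff_one]
    norm_num
  · simp [mul_add, mul_sub, ← mul_assoc, PowerSeries.coeff_succ_mul_X, PowerSeries.coeff_one,
      PowerSeries.coeff_X]
    ring

lemma gfB : (PowerSeries.mk fun m => ((2 * m : ℕ) : ℚ)) * (1 - PowerSeries.X) ^ 2 =
    2 * PowerSeries.X := by
  have : (1 - PowerSeries.X : PowerSeries ℚ) ^ 2 =
    1 - PowerSeries.X - PowerSeries.X + PowerSeries.X * PowerSeries.X := by ring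
  have h3 : (2 : PowerSeries ℚ) = PowerSeries.C (2 : ℚ) := (map_ofNat (PowerSeries.C (R := ℚ)) 2).symm
  rw [this, h3]
  ext k
  rcases k with _ | _ | k
  · simp [mul_add, mul_sub]
  · simp [mul_add, mul_sub, ← mul_assoc, PowerSeries.coeff_succ_mul_X, PowerSeries.coeff_one]
  · simp [mul_add, mul_sub, ← mul_assoc, PowerSeries.coeff_succ_mul_X, PowerSeries.coeff_one,
      PowerSeries.coeff_X]

/-- Let `C` be a simple cycle of length `n ≥ 3`.  Then
`h*(C_C; z) = (1+3z)^n − (2z)^n`, and consequently `Vol(C_C) = 4^n − 2^n`. -/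
theorem hstar_simple_cycle (n : ℕ) [NeZero n] (hn : 3 ≤ n) :
    IsHStarPoly (cosmoPolytope (cycleEnds n))
      (Fintype.card (ZMod n) + Fintype.card (ZMod n) - 1)
      ((1 + 3 * Polynomial.X) ^ n - (2 * Polynomial.X) ^ n) ∧
    (((1 + 3 * Polynomial.X) ^ n - (2 * Polynomial.X) ^ n : Polynomial ℚ)).eval 1 =
      4 ^ n - 2 ^ n := by
  refine ⟨?_, by norm_num⟩
  unfold IsHStarPoly
  have hE : ehrhartSeries (cosmoPolytope (cycleEnds n)) =
      (PowerSeries.mk fun m => ((4 * m + 1 : ℕ) : ℚ)) ^ n -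
        (PowerSeries.mk fun m => ((2 * m : ℕ) : ℚ)) ^ n := by
    ext t
    unfold ehrhartSeries
    rw [PowerSeries.coeff_mk]
    split_ifs with ht
    · subst ht
      have : n ≠ 0 := by omega
      simp [this]
    · exact count_eq n hn t ht
  have hd : Fintype.card (ZMod n) + Fintype.card (ZMod n) - 1 + 1 = 2 * n := by
    rw [ZMod.card]; omega
  rw [hE, hd, pow_mul, sub_mul, ← mul_pow, ← mul_pow, gfA, gfB]
  have h3 : ((3 : Polynomial ℚ) : PowerSeries ℚ) = 3 := by
    exact map_ofNat (Polynomial.coeToPowerSeries.ringHom (R := ℚ)) 3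
  have h2 : ((2 : Polynomial ℚ) : PowerSeries ℚ) = 2 := by
    exact map_ofNat (Polynomial.coeToPowerSeries.ringHom (R := ℚ)) 2
  simp [h3, h2]
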